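/- Let X be a set and A an infinite well-orderable set such that there is no surjection from X onto A, and let f : A → P(X) \ {∅} be a function assigning to each element of A a non-empty subset of X. Then for every positive integer p there exists a p-element subset F of A such that ⋂_{a ∈ F} f(a) is non-empty. -/

import Mathlib

section Pigeonhole

open Cardinal

universe u v

theorem exists_surjective_iff_lift_mk_le {α : Type u} {β : Type v} [Nonempty β] :
    (∃ g : α → β, Function.Surjective g) ↔ lift.{u} #β ≤ lift.{v} #α := by
  rw [Function.exists_surjective_iff, lift_mk_le']
  exact and_iff_right inferInstance

theorem exists_infinite_preimage_singleton_of_lift_mk_lt {α : Type u} {β : Type v} [Infinite α]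
    (c : α → β) (h : lift.{u} #β < lift.{v} #α) : ∃ b, (c ⁻¹' {b}).Infinite := by
  obtain ⟨⟨b⟩, hb⟩ := exists_infinite_fiber (ULift.map c : ULift.{v} α → ULift.{u} β) (by simpa)
  have hfiber : ULift.map c ⁻¹' {ULift.up b} = ULift.down.{v} ⁻¹' (c ⁻¹' {b}) :=
    Set.ext fun _ ↦ ULift.ext_iff
  rw [Set.infinite_coe_iff, hfiber] at hb
  exact ⟨b, fun hfin ↦ hb (hfin.preimage ULift.down_injective.injOn)⟩

end Pigeonhole

theorem stmt7_general {X A : Type*} [Infinite A]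
    (hns : ¬ ∃ g : X → A, Function.Surjective g)
    (f : A → Set X) (hf : ∀ a : A, (f a).Nonempty) :
    ∃ x, {a | x ∈ f a}.Infinite := by
  choose c hc using hf
  obtain ⟨x, hx⟩ := exists_infinite_preimage_singleton_of_lift_mk_lt c
    (not_le.mp (exists_surjective_iff_lift_mk_le.not.mp hns))
  exact ⟨x, hx.mono fun a (ha : c a = x) ↦ ha ▸ hc a⟩

/-- If `A` is an infinite well-orderable set, there is no surjection from `X` onto
`A`, and `f : A → P(X) \ {∅}` assigns a non-empty subset of `X` to each element of
`A`, then for every positive integer `p` there is a `p`-element subset `F` of `A`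
such that `⋂_{a ∈ F} f a` is non-empty. -/
theorem stmt7 {X A : Type*} [Infinite A]
    (hwo : ∃ r : A → A → Prop, IsWellOrder A r)
    (hns : ¬ ∃ g : X → A, Function.Surjective g)
    (f : A → Set X) (hf : ∀ a : A, (f a).Nonempty) :
    ∀ p : ℕ, 0 < p → ∃ F : Finset A, F.card = p ∧ (⋂ a ∈ F, f a).Nonempty := by
  intro p _
  obtain ⟨x, hx⟩ := stmt7_general hns f hf
  obtain ⟨F, hF, hcard⟩ := hx.exists_subset_card_eq p
  exact ⟨F, hcard, x, Set.mem_iInter₂.mpr hF⟩
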